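/- Proposition (bandit case). Assume AT ≥ 3. There is a universal constant c > 0 and a bandit algorithm taking as input a parameter λ ∈ (A/T, 1) and predictions Q̃ : 𝒜 → [0,1], which satisfies both of the following guarantees: (1) for every ε ≥ 0, if Q̃ is an ε-approximate distillation of Q*, then the expected regret is at most c·( ε·T + √(|𝒢|·T·log(AT)) + √(λ·A·T·log(AT)) ), where 𝒢 = {a ∈ 𝒜 \ {a*} : Q̃(a) ≥ Q*(a*) − ε}; (2) for an arbitrary choice of Q̃, the expected regret is at most c·√(T·A·log(AT)/λ). -/

import Mathlib

open MeasureTheory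
open scoped BigOperators Classical

noncomputable section

/-- Deterministic interaction of a bandit algorithm `π` with a pre-sampled reward tape `ω`
(where `ω (a, i)` is the reward obtained at the `(i+1)`-st pull of arm `a`):
`runBandit π ω t` is the history after `t` steps, as the list of (arm pulled, reward observed)
pairs, oldest first. -/
def runBandit {A T : ℕ} (π : List (Fin A × ℝ) → Fin A) (ω : Fin A × Fin T → ℝ) :
    ℕ → List (Fin A × ℝ)
  | 0 => []
  | t + 1 =>
      let hist := runBandit π ω t
      let a := π hist
      let i := (hist.filter fun p => decide (p.1 = a)).length
      hist ++ [(a, if hi : i < T then ω (a, ⟨i, hi⟩) else 0)]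

/-- The expected regret of the (deterministic) bandit algorithm `π` over `T` steps, when the
reward of each pull of arm `a` is drawn independently from `ν a` and arm `a` has mean reward
`Qs a` with optimal arm `astar`.  The randomness is a tape `ω : Fin A × Fin T → ℝ`, sampled
from the product measure, whose entry `ω (a, i)` is the reward of the `(i+1)`-st pull of
arm `a`. -/
def banditExpRegret {A T : ℕ} (ν : Fin A → Measure ℝ) [∀ a, SigmaFinite (ν a)]
    (Qs : Fin A → ℝ) (astar : Fin A) (π : List (Fin A × ℝ) → Fin A) : ℝ :=
  ∫ ω : Fin A × Fin T → ℝ,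
    (∑ t ∈ Finset.range T, (Qs astar - Qs (π (runBandit π ω t))))
      ∂(Measure.pi fun i : Fin A × Fin T => ν i.1)


namespace BanditProof

/-- Confidence width. -/
def bon (L : ℝ) (n : ℕ) : ℝ := Real.sqrt (2 * L) * (1 / Real.sqrt ((n : ℝ) + 1))

lemma bon_nonneg (L : ℝ) (n : ℕ) : 0 ≤ bon L n := by unfold bon; positivity

lemma bon_anti (L : ℝ) {n m : ℕ} (h : n ≤ m) : bon L m ≤ bon L n := by
  unfold bon
  have : (n : ℝ) ≤ m := by exact_mod_cast h
  gcongr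

lemma inv_sqrt_le (n : ℕ) :
    1 / Real.sqrt ((n : ℝ) + 1) ≤ 2 * (Real.sqrt ((n : ℝ) + 1) - Real.sqrt n) := by
  have h0 : (0 : ℝ) ≤ n := Nat.cast_nonneg n
  have h1 : 0 < Real.sqrt ((n : ℝ) + 1) := Real.sqrt_pos.2 (by positivity)
  rw [div_le_iff₀ h1]
  nlinarith [Real.sq_sqrt h0, Real.sq_sqrt (show (0 : ℝ) ≤ (n : ℝ) + 1 by positivity),
    sq_nonneg (Real.sqrt ((n : ℝ) + 1) - Real.sqrt n)]

section Det
variable {A : ℕ} (act : ℕ → Fin A) (N : ℕ → Fin A → ℕ)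

lemma pot (h0 : ∀ a, N 0 a = 0)
    (hs : ∀ t a, N (t + 1) a = N t a + if a = act t then 1 else 0) (H : Finset (Fin A)) (e : ℕ) :
    ∑ t ∈ Finset.range e, (if act t ∈ H then 1 / Real.sqrt ((N t (act t) : ℝ) + 1) else 0)
      ≤ 2 * ∑ a ∈ H, Real.sqrt (N e a) := by
  induction e with
  | zero => simp [h0]
  | succ e ih =>
    rw [Finset.sum_range_succ]
    have key : (if act e ∈ H then 1 / Real.sqrt ((N e (act e) : ℝ) + 1) else 0)
        ≤ 2 * ∑ a ∈ H, (Real.sqrt (N (e + 1) a) - Real.sqrt (N e a)) := by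
      have : ∑ a ∈ H, (Real.sqrt (N (e + 1) a) - Real.sqrt (N e a))
          = ∑ a ∈ H, if a = act e then
              (Real.sqrt ((N e (act e) : ℝ) + 1) - Real.sqrt (N e (act e))) else 0 := by
        refine Finset.sum_congr rfl fun a _ => ?_
        rw [hs]
        split_ifs with h
        · subst h; push_cast; rfl
        · simp
      rw [this, Finset.sum_ite_eq']
      split_ifs
      · exact inv_sqrt_le _
      · simp
    rw [Finset.sum_sub_distrib] at key
    linarith

lemma cnt_sum (h0 : ∀ a, N 0 a = 0)
    (hs : ∀ t a, N (t + 1) a = N t a + if a = act t then 1 else 0) (e : ℕ) :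
    ∑ a, N e a = e := by
  induction e with
  | zero => simp [h0]
  | succ e ih => simp [hs, Finset.sum_add_distrib, ih]

lemma pot_bound (h0 : ∀ a, N 0 a = 0)
    (hs : ∀ t a, N (t + 1) a = N t a + if a = act t then 1 else 0) (L : ℝ)
    (H : Finset (Fin A)) (e : ℕ) :
    ∑ t ∈ Finset.range e, (if act t ∈ H then 2 * bon L (N t (act t)) else 0)
      ≤ 4 * Real.sqrt (2 * L) * Real.sqrt (H.card * e) := by
  have h1 := pot act N h0 hs H e
  have h2 : ∑ a ∈ H, Real.sqrt (N e a) ≤ Real.sqrt (H.card * e) := by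
    apply Real.le_sqrt_of_sq_le
    refine sq_sum_le_card_mul_sum_sq.trans ?_
    gcongr
    calc ∑ a ∈ H, Real.sqrt (N e a) ^ 2 = ∑ a ∈ H, (N e a : ℝ) :=
          Finset.sum_congr rfl fun a _ => Real.sq_sqrt (Nat.cast_nonneg _)
      _ ≤ ∑ a, (N e a : ℝ) :=
          Finset.sum_le_univ_sum_of_nonneg fun a => Nat.cast_nonneg _
      _ = e := by exact_mod_cast cnt_sum act N h0 hs e
  have h3 : ∑ t ∈ Finset.range e, (if act t ∈ H then 2 * bon L (N t (act t)) else 0)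
      = 2 * Real.sqrt (2 * L) * ∑ t ∈ Finset.range e,
        (if act t ∈ H then 1 / Real.sqrt ((N t (act t) : ℝ) + 1) else 0) := by
    rw [Finset.mul_sum]
    refine Finset.sum_congr rfl fun t _ => ?_
    unfold bon
    split_ifs <;> ring
  rw [h3]
  have := mul_le_mul_of_nonneg_left (h1.trans (mul_le_mul_of_nonneg_left h2 zero_le_two))
    (show 0 ≤ 2 * Real.sqrt (2 * L) by positivity)
  linarith

lemma cnt_mono (hs : ∀ t a, N (t + 1) a = N t a + if a = act t then 1 else 0) (a : Fin A) :
    Monotone fun t => N t a := by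
  apply monotone_nat_of_le_succ
  intro t; simp only [hs]; omega

/-- the last pull of an arm before time `e` -/
lemma last_pull (h0 : ∀ a, N 0 a = 0)
    (hs : ∀ t a, N (t + 1) a = N t a + if a = act t then 1 else 0) (a : Fin A) (e : ℕ)
    (hp : 0 < N e a) : ∃ t < e, act t = a ∧ N t a + 1 = N e a := by
  induction e with
  | zero => simp [h0] at hp
  | succ e ih =>
    by_cases h : a = act e
    · exact ⟨e, by omega, h.symm, by rw [hs, if_pos h]⟩
    · rw [hs, if_neg h, add_zero] at hp ⊢
      obtain ⟨t, ht, h1, h2⟩ := ih hp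
      exact ⟨t, by omega, h1, h2⟩

/-- the deterministic regret analysis -/
lemma det_bound (T : ℕ) (hT : 0 < T) (L lam : ℝ) (hL : 1 ≤ L) (hlam : (A : ℝ) / T < lam)
    (hlam1 : lam < 1)
    (Q Qt : Fin A → ℝ) (astar : Fin A) (m : ℕ → Fin A → ℝ)
    (hQ : ∀ a, Q a ≤ Q astar)
    (h0 : ∀ a, N 0 a = 0)
    (hs : ∀ t a, N (t + 1) a = N t a + if a = act t then 1 else 0)
    (hm : ∀ t < T, ∀ a, |m t a - Q a| ≤ bon L (N t a))
    (hact1 : ∀ t < ⌈lam * T⌉₊, ∀ a, m t a + bon L (N t a) ≤ m t (act t) + bon L (N t (act t)))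
    (hact2 : ∀ t, ⌈lam * T⌉₊ ≤ t → ∀ a,
      max (m t a - bon L (N t a)) (min (m t a + bon L (N t a)) (Qt a)) ≤
      max (m t (act t) - bon L (N t (act t)))
        (min (m t (act t) + bon L (N t (act t))) (Qt (act t)))) :
    (∀ ε : ℝ, 0 ≤ ε → (∃ a, (Q astar - Q a) + max (Q a - Qt a) 0 ≤ ε) →
      ∑ t ∈ Finset.range T, (Q astar - Q (act t)) ≤ ε * T
        + 8 * Real.sqrt (((Finset.univ.filter fun a : Fin A =>
              a ≠ astar ∧ Q astar - ε ≤ Qt a).card : ℝ) * T * L)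
        + 8 * Real.sqrt (lam * A * T * L)) ∧
    ∑ t ∈ Finset.range T, (Q astar - Q (act t)) ≤ 16 * Real.sqrt (T * A * L / lam) := by
  have hTr : (0 : ℝ) < T := by exact_mod_cast hT
  have hA : 0 < A := astar.pos
  have hAr : (0 : ℝ) < A := by exact_mod_cast hA
  have hA1 : (1 : ℝ) ≤ A := by exact_mod_cast hA
  have hlam0 : 0 < lam := lt_of_le_of_lt (by positivity) hlam
  have hAlT : (A : ℝ) < lam * T := by rwa [div_lt_iff₀ hTr] at hlam
  set N1 := ⌈lam * T⌉₊ with hN1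
  have hN1lo : lam * T ≤ N1 := Nat.le_ceil _
  have hN1hi : (N1 : ℝ) ≤ 2 * (lam * T) := by
    have := Nat.ceil_lt_add_one (show 0 ≤ lam * T by positivity)
    linarith
  have hN1T : N1 ≤ T := by
    apply Nat.ceil_le.2; nlinarith
  -- phase 1 steps
  have ph1 : ∀ t < N1, Q astar - Q (act t) ≤ 2 * bon L (N t (act t)) := by
    intro t ht
    have a1 := abs_le.1 (hm t (ht.trans_le hN1T) astar)
    have a2 := abs_le.1 (hm t (ht.trans_le hN1T) (act t))
    have := hact1 t ht astar
    linarith [a1.1, a1.2, a2.1, a2.2]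
  have hs2 : Real.sqrt 2 ≤ 1.5 := by
    rw [Real.sqrt_le_left (by norm_num)]; norm_num
  constructor
  · rintro ε hε ⟨a0, ha0⟩
    set G := Finset.univ.filter fun a : Fin A => a ≠ astar ∧ Q astar - ε ≤ Qt a with hG
    have ha0Q : Q astar - ε ≤ Q a0 := by linarith [le_max_right (Q a0 - Qt a0) 0]
    have ha0t : Q astar - ε ≤ Qt a0 := by linarith [le_max_left (Q a0 - Qt a0) 0]
    have ph2 : ∀ t < T, N1 ≤ t →
        Q astar - Q (act t) ≤ ε + if act t ∈ G then 2 * bon L (N t (act t)) else 0 := by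
      intro t htT ht
      have a1 := abs_le.1 (hm t htT a0)
      have a2 := abs_le.1 (hm t htT (act t))
      have h1 := hact2 t ht a0
      have h2 : Q astar - ε ≤ max (m t a0 - bon L (N t a0)) (min (m t a0 + bon L (N t a0)) (Qt a0)) :=
        le_max_of_le_right (le_min (by linarith [a1.1]) ha0t)
      have hb := bon_nonneg L (N t (act t))
      rcases le_max_iff.1 (h2.trans h1) with h | h
      · have : 0 ≤ (if act t ∈ G then 2 * bon L (N t (act t)) else 0) := by
          split_ifs <;> positivity
        linarith [a2.2]
      · by_cases he : act t = astar
        · have : 0 ≤ (if act t ∈ G then 2 * bon L (N t (act t)) else 0) := by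
            split_ifs <;> positivity
          rw [he] at this ⊢
          linarith
        · have h3 := le_min_iff.1 h
          rw [if_pos (Finset.mem_filter.2 ⟨Finset.mem_univ _, he, h3.2⟩)]
          linarith [h3.1, a2.2]
    have step : ∀ t ∈ Finset.range T, Q astar - Q (act t) ≤ ε
        + (if act t ∈ G then 2 * bon L (N t (act t)) else 0)
        + (if t < N1 then 2 * bon L (N t (act t)) else 0) := by
      intro t ht
      have htT := Finset.mem_range.1 ht
      have : 0 ≤ (if act t ∈ G then 2 * bon L (N t (act t)) else 0) := by
        have hb := bon_nonneg L (N t (act t))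
        split_ifs <;> positivity
      by_cases h : t < N1
      · rw [if_pos h]; linarith [ph1 t h]
      · rw [if_neg h]; linarith [ph2 t htT (not_lt.1 h)]
    refine (Finset.sum_le_sum step).trans ?_
    rw [Finset.sum_add_distrib, Finset.sum_add_distrib, Finset.sum_const, Finset.card_range,
      nsmul_eq_mul]
    have e1 := pot_bound act N h0 hs L G T
    have e2 := pot_bound act N h0 hs L Finset.univ N1
    have e3 : ∑ t ∈ Finset.range T, (if t < N1 then 2 * bon L (N t (act t)) else 0)
        = ∑ t ∈ Finset.range N1, 2 * bon L (N t (act t)) := by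
      rw [← Finset.sum_filter]
      congr 1
      ext t; simp; omega
    simp only [Finset.mem_univ, if_true, Finset.card_univ, Fintype.card_fin] at e2
    rw [e3]
    have e4 : Real.sqrt (2 * L) * Real.sqrt (G.card * T) ≤ 2 * Real.sqrt (G.card * T * L) := by
      rw [← Real.sqrt_mul (by positivity)]
      apply Real.sqrt_le_iff.2
      constructor
      · positivity
      · rw [mul_pow, Real.sq_sqrt (by positivity)]
        have : 0 ≤ (G.card * T * L : ℝ) := by positivity
        nlinarith
    have e5 : Real.sqrt (2 * L) * Real.sqrt (A * N1) ≤ 2 * Real.sqrt (lam * A * T * L) := by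
      rw [← Real.sqrt_mul (by positivity)]
      apply Real.sqrt_le_iff.2
      constructor
      · positivity
      · rw [mul_pow, Real.sq_sqrt (by positivity)]
        have := mul_le_mul_of_nonneg_left hN1hi (show 0 ≤ 2 * L * A by positivity)
        nlinarith
    linarith
  · -- a well-explored arm
    set β := Real.sqrt (2 * L) * (1 / Real.sqrt (lam * T / A)) with hβ
    obtain ⟨ah, hah⟩ : ∃ ah, lam * T / A ≤ (N N1 ah : ℝ) := by
      by_contra! hcon
      have h1 : ∑ a : Fin A, (N N1 a : ℝ) < ∑ a : Fin A, lam * T / A :=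
        Finset.sum_lt_sum_of_nonempty ⟨astar, Finset.mem_univ _⟩ fun a _ => hcon a
      have h2 : ∑ a : Fin A, (N N1 a : ℝ) = N1 := by exact_mod_cast cnt_sum act N h0 hs N1
      rw [h2, Finset.sum_const, Finset.card_univ, Fintype.card_fin, nsmul_eq_mul,
        mul_div_cancel₀ _ hAr.ne'] at h1
      linarith
    have hq : 0 < lam * T / A := by positivity
    have hpos : 0 < N N1 ah := by
      have : (0 : ℝ) < N N1 ah := hq.trans_le hah
      exact_mod_cast this
    obtain ⟨s, hsN, hsa, hsc⟩ := last_pull act N h0 hs ah N1 hpos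
    have bβ : ∀ n : ℕ, lam * T / A ≤ (n : ℝ) + 1 → bon L n ≤ β := by
      intro n hn
      unfold bon
      rw [hβ]
      have := Real.sqrt_pos.2 hq
      gcongr
    have hβ0 : 0 ≤ β := by positivity
    have hgap : Q astar - Q ah ≤ 2 * β := by
      have h1 := ph1 s hsN
      rw [hsa] at h1
      have h2 : bon L (N s ah) ≤ β := by
        apply bβ
        have : (N s ah : ℝ) + 1 = N N1 ah := by exact_mod_cast hsc
        linarith
      linarith
    have step : ∀ t ∈ Finset.range T, Q astar - Q (act t) ≤ 4 * β
        + (if act t ∈ (Finset.univ : Finset (Fin A)) then 2 * bon L (N t (act t)) else 0) := by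
      intro t ht
      have htT := Finset.mem_range.1 ht
      rw [if_pos (Finset.mem_univ _)]
      by_cases h : t < N1
      · linarith [ph1 t h]
      · have h' := not_lt.1 h
        have h1 := hact2 t h' ah
        have hb := bon_nonneg L (N t (act t))
        have a1 := abs_le.1 (hm t htT ah)
        have a2 := abs_le.1 (hm t htT (act t))
        have h2 : bon L (N t ah) ≤ β := by
          apply bβ
          have : (N N1 ah : ℝ) ≤ N t ah := by exact_mod_cast cnt_mono act N hs ah h'
          linarith
        have h3 : max (m t (act t) - bon L (N t (act t)))
            (min (m t (act t) + bon L (N t (act t))) (Qt (act t)))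
            ≤ m t (act t) + bon L (N t (act t)) :=
          max_le (by linarith) (min_le_left _ _)
        have h4 := (le_max_left _ _).trans (h1.trans h3)
        linarith [a1.1, a2.2]
    refine (Finset.sum_le_sum step).trans ?_
    rw [Finset.sum_add_distrib, Finset.sum_const, Finset.card_range, nsmul_eq_mul]
    have e2 := pot_bound act N h0 hs L Finset.univ T
    rw [Finset.card_univ, Fintype.card_fin] at e2
    have hR : 0 ≤ T * A * L / lam := by positivity
    have f1 : Real.sqrt (2 * L) * Real.sqrt (A * T) ≤ Real.sqrt 2 * Real.sqrt (T * A * L / lam) := by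
      rw [← Real.sqrt_mul (by positivity), ← Real.sqrt_mul (by positivity)]
      apply Real.sqrt_le_sqrt
      rw [← mul_div_assoc, le_div_iff₀ hlam0]
      have : 0 ≤ 2 * L * (A * T) := by positivity
      nlinarith
    have f2 : T * β = Real.sqrt 2 * Real.sqrt (T * A * L / lam) := by
      rw [hβ, ← Real.sqrt_mul (by positivity), ← Real.sqrt_one, ← Real.sqrt_div (by positivity),
        ← Real.sqrt_mul (by positivity)]
      nth_rewrite 1 [← Real.sqrt_sq hTr.le]
      rw [← Real.sqrt_mul (by positivity)]
      congr 1
      field_simp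
    have f3 : Real.sqrt 2 * Real.sqrt (T * A * L / lam) ≤ 1.5 * Real.sqrt (T * A * L / lam) := by
      gcongr
    nlinarith [Real.sqrt_nonneg (T * A * L / lam)]

end Det

section Hist
variable {A T : ℕ}

/-- number of pulls of `a` in the history -/
def cnt (h : List (Fin A × ℝ)) (a : Fin A) : ℕ := (h.filter fun p => decide (p.1 = a)).length

/-- total reward of `a` in the history -/
def sm (h : List (Fin A × ℝ)) (a : Fin A) : ℝ :=
  ((h.filter fun p => decide (p.1 = a)).map Prod.snd).sum

/-- sum of the first `n` tape entries of arm `a` -/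
def tapeSum (ω : Fin A × Fin T → ℝ) (a : Fin A) (n : ℕ) : ℝ :=
  ∑ i ∈ Finset.range n, if hi : i < T then ω (a, ⟨i, hi⟩) else 0

lemma run_length (π : List (Fin A × ℝ) → Fin A) (ω : Fin A × Fin T → ℝ) (t : ℕ) :
    (runBandit π ω t).length = t := by
  induction t with
  | zero => simp [runBandit]
  | succ t ih => simp [runBandit, ih]

lemma run_cnt (π : List (Fin A × ℝ) → Fin A) (ω : Fin A × Fin T → ℝ) (t : ℕ) (a : Fin A) :
    cnt (runBandit π ω (t + 1)) a
      = cnt (runBandit π ω t) a + if a = π (runBandit π ω t) then 1 else 0 := by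
  simp only [runBandit, cnt, List.filter_append, List.length_append]
  congr 1
  by_cases h : a = π (runBandit π ω t)
  · simp [← h]
  · simp [h, Ne.symm h]

lemma run_sm (π : List (Fin A × ℝ) → Fin A) (ω : Fin A × Fin T → ℝ) (t : ℕ) (a : Fin A) :
    sm (runBandit π ω t) a = tapeSum ω a (cnt (runBandit π ω t) a) := by
  induction t with
  | zero => simp [runBandit, sm, cnt, tapeSum]
  | succ t ih =>
    rw [run_cnt]
    by_cases h : a = π (runBandit π ω t)
    · rw [if_pos h, tapeSum, Finset.sum_range_succ, ← tapeSum, ← ih]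
      simp only [runBandit, sm, List.filter_append, List.map_append, List.sum_append]
      congr 1
      rw [← h]
      simp [cnt]
      rfl
    · rw [if_neg h, add_zero, ← ih]
      simp only [runBandit, sm, List.filter_append, List.map_append, List.sum_append]
      simp [Ne.symm h]

lemma cnt_le (h : List (Fin A × ℝ)) (a : Fin A) : cnt h a ≤ h.length := List.length_filter_le _ _

/-- empirical mean -/
def mean (h : List (Fin A × ℝ)) (a : Fin A) : ℝ := sm h a / cnt h a

/-- The index that the algorithm maximizes. -/
def index (T : ℕ) (L lam : ℝ) (Qt : Fin A → ℝ) (h : List (Fin A × ℝ)) (a : Fin A) : ℝ :=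
  if h.length < ⌈lam * T⌉₊ then mean h a + bon L (cnt h a)
  else max (mean h a - bon L (cnt h a)) (min (mean h a + bon L (cnt h a)) (Qt a))

lemma exists_alg (hA : 0 < A) (T : ℕ) (L : ℝ) :
    ∃ Alg : ℝ → (Fin A → ℝ) → List (Fin A × ℝ) → Fin A,
      ∀ lam Qt h a, index T L lam Qt h a ≤ index T L lam Qt h (Alg lam Qt h) := by
  have : Nonempty (Fin A) := ⟨⟨0, hA⟩⟩
  have : ∀ (lam : ℝ) (Qt : Fin A → ℝ) (h : List (Fin A × ℝ)), ∃ b, ∀ a,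
      index T L lam Qt h a ≤ index T L lam Qt h b := fun lam Qt h => Finite.exists_max _
  choose f hf using this
  exact ⟨f, hf⟩

end Hist

section Prob
open ProbabilityTheory

variable {A T : ℕ} (ν : Fin A → Measure ℝ) [∀ a, IsProbabilityMeasure (ν a)]

/-- the tape measure -/
abbrev tapeM (T : ℕ) : Measure (Fin A × Fin T → ℝ) := Measure.pi fun i : Fin A × Fin T => ν i.1

lemma subG (hν : ∀ a, ν a (Set.Icc (0 : ℝ) 1)ᶜ = 0) (Qs : Fin A → ℝ)
    (hQ : ∀ a, (∫ x, x ∂(ν a)) = Qs a) (p : Fin A × Fin T) :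
    HasSubgaussianMGF (fun ω : Fin A × Fin T → ℝ => ω p - Qs p.1) (1 / 4) (tapeM ν T) := by
  have hmp := measurePreserving_eval (fun i : Fin A × Fin T => ν i.1) p
  have h1 : HasSubgaussianMGF (fun x : ℝ => x - Qs p.1) ((‖(1 : ℝ) - 0‖₊ / 2) ^ 2) (ν p.1) := by
    have := hasSubgaussianMGF_of_mem_Icc (μ := ν p.1) (X := fun x => x) (a := 0) (b := 1)
      aemeasurable_id (by rw [ae_iff]; exact hν p.1)
    rwa [hQ] at this
  have h2 : ((‖(1 : ℝ) - 0‖₊ / 2) ^ 2 : NNReal) = 1 / 4 := by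
    simp; norm_num
  rw [h2, ← hmp.map_eq] at h1
  exact h1.of_map hmp.measurable.aemeasurable

lemma indep (Qs : Fin A → ℝ) :
    iIndepFun (fun (p : Fin A × Fin T) (ω : Fin A × Fin T → ℝ) => ω p - Qs p.1) (tapeM ν T) :=
  iIndepFun_pi (X := fun (p : Fin A × Fin T) (x : ℝ) => x - Qs p.1)
    fun p => (measurable_id.sub_const _).aemeasurable

lemma tapeSum_eq (ω : Fin A × Fin T → ℝ) (a : Fin A) {n : ℕ} (hn : n ≤ T) :
    tapeSum ω a n = ∑ i : Fin n, ω (a, Fin.castLE hn i) := by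
  rw [tapeSum, Finset.sum_range]
  refine Finset.sum_congr rfl fun i _ => ?_
  rw [dif_pos (i.2.trans_le hn)]
  rfl

lemma exp_bound (L : ℝ) (hL : 0 ≤ L) {n : ℕ} (hn : 1 ≤ n) :
    Real.exp (-(n * bon L n) ^ 2 / (2 * ∑ _i : Fin n, ((1 / 4 : NNReal) : ℝ)))
      ≤ Real.exp (-(2 * L)) := by
  apply Real.exp_le_exp.2
  have hn' : (1 : ℝ) ≤ n := by exact_mod_cast hn
  have h1 : bon L n ^ 2 = 2 * L / (n + 1) := by
    unfold bon
    rw [mul_pow, div_pow, Real.sq_sqrt (by positivity), Real.sq_sqrt (by positivity)]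
    ring
  rw [Finset.sum_const, Finset.card_univ, Fintype.card_fin, nsmul_eq_mul, mul_pow, h1]
  have : -((n : ℝ) ^ 2 * (2 * L / (n + 1))) / (2 * (n * ((1 / 4 : NNReal) : ℝ)))
      = -(4 * L * n / (n + 1)) := by
    push_cast
    field_simp
  rw [this, neg_le_neg_iff, le_div_iff₀ (by positivity)]
  nlinarith

lemma hoeff (hν : ∀ a, ν a (Set.Icc (0 : ℝ) 1)ᶜ = 0) (Qs : Fin A → ℝ)
    (hQ : ∀ a, (∫ x, x ∂(ν a)) = Qs a) (L : ℝ) (hL : 0 ≤ L) (a : Fin A) {n : ℕ} (hn1 : 1 ≤ n)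
    (hn : n ≤ T) :
    (tapeM ν T).real {ω | bon L n < |tapeSum ω a n / n - Qs a|} ≤ 2 * Real.exp (-(2 * L)) := by
  have hn' : (0 : ℝ) < n := by exact_mod_cast hn1
  have hinj : Function.Injective (fun i : Fin n => ((a, Fin.castLE hn i) : Fin A × Fin T)) := by
    intro i j hij
    simpa using hij
  have hi := (indep (T := T) ν Qs).precomp hinj
  have hi' := hi.comp (fun _ x => -x) (fun _ => measurable_neg)
  have hε : 0 ≤ n * bon L n := mul_nonneg hn'.le (bon_nonneg _ _)
  have u1 := HasSubgaussianMGF.measure_sum_ge_le_of_iIndepFun hi (s := Finset.univ)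
    (c := fun _ => 1 / 4) (fun i _ => subG ν hν Qs hQ _) hε
  have u2 := HasSubgaussianMGF.measure_sum_ge_le_of_iIndepFun hi' (s := Finset.univ)
    (c := fun _ => 1 / 4) (fun i _ => (subG ν hν Qs hQ _).neg) hε
  have eb := exp_bound L hL hn1
  rw [NNReal.coe_sum] at u1 u2
  have u3 := add_le_add (u1.trans eb) (u2.trans eb)
  rw [← two_mul] at u3
  refine le_trans (measureReal_mono ?_ (measure_ne_top _ _))
    ((measureReal_union_le _ _).trans u3)
  intro ω hω
  simp only [Set.mem_setOf_eq, Function.comp, Set.mem_union] at hω ⊢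
  rw [Finset.sum_neg_distrib, Finset.sum_sub_distrib, ← tapeSum_eq ω a hn, Finset.sum_const,
    Finset.card_univ, Fintype.card_fin, nsmul_eq_mul]
  have e : tapeSum ω a n - n * Qs a = n * (tapeSum ω a n / n - Qs a) := by
    field_simp
  rw [e]
  rcases lt_abs.1 hω with h | h
  · left; exact mul_le_mul_of_nonneg_left h.le hn'.le
  · right; rw [← mul_neg]; exact mul_le_mul_of_nonneg_left h.le hn'.le

/-- the bad event -/
def bad (T : ℕ) (Qs : Fin A → ℝ) (L : ℝ) : Set (Fin A × Fin T → ℝ) :=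
  ⋃ p ∈ (Finset.univ : Finset (Fin A)) ×ˢ Finset.Icc 1 T,
    {ω | bon L p.2 < |tapeSum ω p.1 p.2 / p.2 - Qs p.1|}

lemma meas_bad (Qs : Fin A → ℝ) (L : ℝ) : MeasurableSet (bad T Qs L) := by
  refine Finset.measurableSet_biUnion _ fun p hp => ?_
  have hp2 : p.2 ≤ T := (Finset.mem_Icc.1 (Finset.mem_product.1 hp).2).2
  apply measurableSet_lt measurable_const
  simp only [tapeSum_eq _ _ hp2]
  apply Measurable.abs
  fun_prop

lemma bad_le (hν : ∀ a, ν a (Set.Icc (0 : ℝ) 1)ᶜ = 0) (Qs : Fin A → ℝ)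
    (hQ : ∀ a, (∫ x, x ∂(ν a)) = Qs a) (L : ℝ) (hL : 0 ≤ L) :
    (tapeM ν T).real (bad T Qs L) ≤ A * T * (2 * Real.exp (-(2 * L))) := by
  refine (measureReal_biUnion_finset_le _ _).trans ?_
  refine (Finset.sum_le_card_nsmul _ _ (2 * Real.exp (-(2 * L))) ?_).trans ?_
  · intro p hp
    have := Finset.mem_Icc.1 (Finset.mem_product.1 hp).2
    exact hoeff ν hν Qs hQ L hL p.1 this.1 this.2
  · simp

lemma not_bad {Qs : Fin A → ℝ} (hQ1 : ∀ a, Qs a ∈ Set.Icc (0 : ℝ) 1) {L : ℝ} (hL : 1 ≤ L)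
    {ω : Fin A × Fin T → ℝ} (hω : ω ∉ bad T Qs L) (a : Fin A) {n : ℕ} (hn : n ≤ T) :
    |tapeSum ω a n / n - Qs a| ≤ bon L n := by
  rcases Nat.eq_zero_or_pos n with h0 | h0
  · subst h0
    have h1 : 1 ≤ bon L 0 := by
      unfold bon
      rw [Nat.cast_zero, zero_add, Real.sqrt_one, div_one, mul_one]
      exact Real.one_le_sqrt.2 (by linarith)
    have := hQ1 a
    simp only [Nat.cast_zero, div_zero, zero_sub, abs_neg]
    rw [abs_of_nonneg this.1]
    exact this.2.trans h1
  · by_contra! hcon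
    apply hω
    simp only [bad, Set.mem_iUnion]
    exact ⟨(a, n), by simp; omega, hcon⟩

/-- combination of a high probability bound with the trivial bound -/
lemma int_bound (f : (Fin A × Fin T → ℝ) → ℝ) (B : ℝ) (hB : 0 ≤ B) (E : Set (Fin A × Fin T → ℝ))
    (hE : MeasurableSet E) (h1 : ∀ ω, ω ∉ E → f ω ≤ B) (h2 : ∀ ω, f ω ≤ T) :
    ∫ ω, f ω ∂(tapeM ν T) ≤ B + T * (tapeM ν T).real E := by
  by_cases hf : Integrable f (tapeM ν T)
  · have hg : Integrable (fun ω => B + E.indicator (fun _ => (T : ℝ)) ω) (tapeM ν T) :=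
      (integrable_const _).add ((integrable_const _).indicator hE)
    refine (integral_mono hf hg ?_).trans ?_
    · intro ω
      by_cases h : ω ∈ E
      · simp only [Set.indicator_of_mem h]; linarith [h2 ω]
      · simp only [Set.indicator_of_notMem h]; linarith [h1 ω h]
    · rw [integral_add (integrable_const _) ((integrable_const _).indicator hE),
        integral_indicator_const _ hE]
      simp [mul_comm]
  · rw [integral_undef hf]; positivity

end Prob

end BanditProof

/-- **Proposition (bandit case).**  Assume `AT ≥ 3`.  There is a universal constant `c > 0`
and a bandit algorithm taking as input a parameter `λ ∈ (A/T, 1)` and predictions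
`Q̃ : 𝒜 → [0,1]` such that:
(1) for every `ε ≥ 0`, if `Q̃` is an ε-approximate distillation of `Q^*`, the expected regret
is at most `c (εT + √(|𝒢| T log(AT)) + √(λ A T log(AT)))`, where
`𝒢 = {a ≠ a^* : Q̃(a) ≥ Q^*(a^*) − ε}`; and
(2) for arbitrary `Q̃`, the expected regret is at most `c √(T A log(AT)/λ)`. -/
theorem bandit_predictions_guarantee :
    ∃ c : ℝ, 0 < c ∧
      ∀ A T : ℕ, 3 ≤ A * T →
        ∃ Alg : ℝ → (Fin A → ℝ) → List (Fin A × ℝ) → Fin A,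
          ∀ (ν : Fin A → Measure ℝ) [∀ a, IsProbabilityMeasure (ν a)],
            ∀ (Qs : Fin A → ℝ) (astar : Fin A) (lam : ℝ) (Qt : Fin A → ℝ),
            (∀ a, ν a (Set.Icc (0 : ℝ) 1)ᶜ = 0) →
            (∀ a, (∫ x, x ∂(ν a)) = Qs a) →
            (∀ a, Qs a ∈ Set.Icc (0 : ℝ) 1) →
            (∀ a, a ≠ astar → Qs a < Qs astar) →
            (A : ℝ) / T < lam → lam < 1 →
            (∀ a, Qt a ∈ Set.Icc (0 : ℝ) 1) →
            -- (1) accurate predictions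
            ((∀ ε : ℝ, 0 ≤ ε →
                (∃ a, (Qs astar - Qs a) + max (Qs a - Qt a) 0 ≤ ε) →
                banditExpRegret (T := T) ν Qs astar (Alg lam Qt) ≤
                  c * (ε * T
                    + Real.sqrt
                        (((Finset.univ.filter fun a : Fin A =>
                            a ≠ astar ∧ Qs astar - ε ≤ Qt a).card : ℝ) * T * Real.log (A * T))
                    + Real.sqrt (lam * A * T * Real.log (A * T)))) ∧
            -- (2) robustness: arbitrary predictions
              banditExpRegret (T := T) ν Qs astar (Alg lam Qt) ≤
                c * Real.sqrt (T * A * Real.log (A * T) / lam)) := by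
  refine ⟨20, by norm_num, fun A T hAT => ?_⟩
  have hA : 0 < A := Nat.pos_of_ne_zero (by rintro rfl; simp at hAT)
  have hT : 0 < T := Nat.pos_of_ne_zero (by rintro rfl; simp at hAT)
  set L := Real.log (A * T) with hLdef
  obtain ⟨Alg, hAlg⟩ := BanditProof.exists_alg hA T L
  refine ⟨Alg, ?_⟩
  intro ν _ Qs astar lam Qt hν hQ hQ1 hopt hlam hlam1 hQt
  have hATr : (3 : ℝ) ≤ A * T := by exact_mod_cast hAT
  have hL : 1 ≤ L := by
    rw [hLdef, Real.le_log_iff_exp_le (by linarith)]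
    linarith [Real.exp_one_lt_d9]
  have hTr : (0 : ℝ) < T := by exact_mod_cast hT
  have hA1 : (1 : ℝ) ≤ A := by exact_mod_cast hA
  have hlam0 : 0 < lam := lt_of_le_of_lt (by positivity) hlam
  have hAlT : (A : ℝ) < lam * T := by rwa [div_lt_iff₀ hTr] at hlam
  have hQle : ∀ a, Qs a ≤ Qs astar := by
    intro a
    by_cases h : a = astar
    · rw [h]
    · exact (hopt a h).le
  have hdet : ∀ ω : Fin A × Fin T → ℝ, ω ∉ BanditProof.bad T Qs L → _ := fun ω hω =>
    BanditProof.det_bound (fun t => Alg lam Qt (runBandit (Alg lam Qt) ω t))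
      (fun t a => BanditProof.cnt (runBandit (Alg lam Qt) ω t) a) T hT L lam hL hlam hlam1
      Qs Qt astar (fun t a => BanditProof.mean (runBandit (Alg lam Qt) ω t) a) hQle
      (by intro a; simp [runBandit, BanditProof.cnt])
      (fun t a => BanditProof.run_cnt _ _ _ _)
      (by
        intro t ht a
        simp only [BanditProof.mean, BanditProof.run_sm]
        apply BanditProof.not_bad hQ1 hL hω
        exact (BanditProof.cnt_le _ _).trans (by rw [BanditProof.run_length]; exact ht.le))
      (by
        intro t ht a
        have h := hAlg lam Qt (runBandit (Alg lam Qt) ω t) a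
        simpa only [BanditProof.index, BanditProof.run_length, if_pos ht] using h)
      (by
        intro t ht a
        have h := hAlg lam Qt (runBandit (Alg lam Qt) ω t) a
        simpa only [BanditProof.index, BanditProof.run_length, if_neg (not_lt.2 ht)] using h)
  have htriv : ∀ ω : Fin A × Fin T → ℝ, ∑ t ∈ Finset.range T,
      (Qs astar - Qs (Alg lam Qt (runBandit (Alg lam Qt) ω t))) ≤ T := by
    intro ω
    refine (Finset.sum_le_card_nsmul _ _ 1 fun t _ => ?_).trans (by simp)
    linarith [(hQ1 astar).2, (hQ1 (Alg lam Qt (runBandit (Alg lam Qt) ω t))).1]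
  have hbad : T * (BanditProof.tapeM ν T).real (BanditProof.bad T Qs L) ≤ 2 := by
    have h1 := BanditProof.bad_le (T := T) ν hν Qs hQ L (by linarith)
    have h2 : Real.exp (-(2 * L)) = 1 / ((A : ℝ) * T) ^ 2 := by
      rw [Real.exp_neg, two_mul, Real.exp_add, hLdef, Real.exp_log (by linarith)]
      rw [one_div, sq]
    rw [h2] at h1
    calc T * (BanditProof.tapeM ν T).real (BanditProof.bad T Qs L)
        ≤ T * (A * T * (2 * (1 / ((A : ℝ) * T) ^ 2))) := by gcongr
      _ = 2 / A := by field_simp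
      _ ≤ 2 := div_le_self (by norm_num) hA1
  have hAT2 : 1 ≤ lam * A * T * L := by
    have : 1 ≤ lam * T * A := by nlinarith
    nlinarith
  have hAT3 : 1 ≤ T * A * L / lam := by
    rw [le_div_iff₀ hlam0]; nlinarith
  constructor
  · intro ε hε hex
    refine (BanditProof.int_bound ν _ _ ?_ _ (BanditProof.meas_bad Qs L)
      (fun ω hω => (hdet ω hω).1 ε hε hex) htriv).trans ?_
    · positivity
    · have h1 : 1 ≤ Real.sqrt (lam * A * T * L) := Real.one_le_sqrt.2 hAT2
      have h2 := Real.sqrt_nonneg (((Finset.univ.filter fun a : Fin A =>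
                            a ≠ astar ∧ Qs astar - ε ≤ Qt a).card : ℝ) * T * L)
      have h3 : 0 ≤ ε * T := by positivity
      linarith
  · refine (BanditProof.int_bound ν _ _ ?_ _ (BanditProof.meas_bad Qs L)
      (fun ω hω => (hdet ω hω).2) htriv).trans ?_
    · positivity
    · have h1 : 1 ≤ Real.sqrt (T * A * L / lam) := Real.one_le_sqrt.2 hAT3
      linarith
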